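/- arXiv:1607.05828 — 2 statements merged into one kernel-verified Lean document; each statement's English description precedes it below -/
import Mathlib

section
/- Let V be an n-dimensional real inner product space (n ≥ 2), W a real inner product space, ζ : V × V → W a symmetric bilinear map, and T the tensor defined by the algebraic Gauss equation. Let r be a real number with 0 < r < n(n−1) and a(r) = (n−1)(n+r)(n²−n−r)/(nr). Then for every orthonormal basis (e_1,…,e_n) of V, writing ζ_{ij} = ζ(e_i,e_j), τ_T = Σ_{1≤i<j≤n} T(e_i,e_j,e_j,e_i), C^{T,ζ} = (1/n) Σ_{i,j=1}^n ‖ζ_{ij}‖², and C^{T,ζ}(Π_{n−1}) = (1/(n−1)) Σ_{i,j=1}^{n−1} ‖ζ_{ij}‖² for the hyperplane Π_{n−1} spanned by e_1,…,e_{n−1}, one has 2τ_T/(n(n−1)) ≤ (1/(n(n−1))) ( r · C^{T,ζ} + a(r) · C^{T,ζ}(Π_{n−1}) ). In particular, the T-normalized scalar curvature is bounded above by (1/(n(n−1))) times the algebraic Casorati curvature δ_{C^{T,ζ}}(r;n−1) = r·C^{T,ζ} + a(r)·inf over hyperplanes of C^{T,ζ}(Π_{n−1}). -/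
open RealInnerProductSpace

theorem two_mul_sum_lt_aux {n : ℕ} (f : Fin n → Fin n → ℝ) (hs : ∀ i j, f i j = f j i)
    (hd : ∀ i, f i i = 0) :
    2 * (∑ i : Fin n, ∑ j : Fin n, if i < j then f i j else 0) = ∑ i, ∑ j, f i j := by
  have h1 : (∑ i : Fin n, ∑ j : Fin n, if i < j then f i j else 0)
      = ∑ i : Fin n, ∑ j : Fin n, if j < i then f i j else 0 := by
    rw [Finset.sum_comm]
    refine Finset.sum_congr rfl fun i _ => Finset.sum_congr rfl fun j _ => ?_
    rw [hs]
  rw [two_mul]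
  nth_rewrite 2 [h1]
  rw [← Finset.sum_add_distrib]
  refine Finset.sum_congr rfl fun i _ => ?_
  rw [← Finset.sum_add_distrib]
  refine Finset.sum_congr rfl fun j _ => ?_
  rcases lt_trichotomy i j with h | h | h
  · simp [h, h.not_gt]
  · subst h; simp [hd]
  · simp [h, h.not_gt]

theorem diag_le_aux {n : ℕ} (g : Fin n → Fin n → ℝ) (hg : ∀ i j, 0 ≤ g i j) :
    ∑ i, g i i ≤ ∑ i, ∑ j, g i j :=
  Finset.sum_le_sum fun i _ =>
    Finset.single_le_sum (f := fun j => g i j) (fun j _ => hg i j) (Finset.mem_univ i)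

theorem norm_sum_sq_le_aux {W : Type*} [NormedAddCommGroup W] {m : ℕ} (v : Fin m → W) :
    ‖∑ i, v i‖ ^ 2 ≤ (m : ℝ) * ∑ i, ‖v i‖ ^ 2 := by
  have h1 : ‖∑ i, v i‖ ^ 2 ≤ (∑ i, ‖v i‖) ^ 2 :=
    pow_le_pow_left₀ (norm_nonneg _) (norm_sum_le _ _) 2
  have h2 := sq_sum_le_card_mul_sum_sq (s := Finset.univ) (f := fun i : Fin m => ‖v i‖)
  simp only [Finset.card_univ, Fintype.card_fin] at h2
  exact h1.trans h2

/-- For `0 < r < n(n−1)` and any orthonormal basis, the normalized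
`T`-scalar curvature is bounded by `(1/(n(n−1)))(r·C^{T,ζ} + a(r)·C^{T,ζ}(P_{n−1}))`,
where `P_{n−1}` is the hyperplane spanned by `e_1,…,e_{n−1}`. -/
theorem algebraic_casorati_inequality_small_r
    {V W : Type*} [NormedAddCommGroup V] [InnerProductSpace ℝ V]
    [FiniteDimensional ℝ V] [NormedAddCommGroup W] [InnerProductSpace ℝ W]
    (n : ℕ) (hn : 2 ≤ n) (e : OrthonormalBasis (Fin n) ℝ V)
    (ζ : V →ₗ[ℝ] V →ₗ[ℝ] W) (hζ : ∀ X Y : V, ζ X Y = ζ Y X)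
    (T : V → V → V → V → ℝ)
    (hT : ∀ X Y Z W' : V, T X Y Z W' = ⟪ζ X W', ζ Y Z⟫ - ⟪ζ X Z, ζ Y W'⟫)
    (r : ℝ) (hr0 : 0 < r) (hr1 : r < (n : ℝ) * ((n : ℝ) - 1))
    (τ C CP : ℝ)
    (hτ : τ = ∑ i : Fin n, ∑ j : Fin n,
        if i < j then T (e i) (e j) (e j) (e i) else 0)
    (hC : C = (1 / (n : ℝ)) * ∑ i : Fin n, ∑ j : Fin n, ‖ζ (e i) (e j)‖ ^ 2)
    (hCP : CP = (1 / ((n : ℝ) - 1)) *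
        ∑ i ∈ Finset.univ.filter (fun i : Fin n => (i : ℕ) < n - 1),
          ∑ j ∈ Finset.univ.filter (fun j : Fin n => (j : ℕ) < n - 1),
            ‖ζ (e i) (e j)‖ ^ 2) :
    2 * τ / ((n : ℝ) * ((n : ℝ) - 1)) ≤
      (1 / ((n : ℝ) * ((n : ℝ) - 1))) *
        (r * C +
          (((n : ℝ) - 1) * ((n : ℝ) + r) * ((n : ℝ) ^ 2 - (n : ℝ) - r) / ((n : ℝ) * r))
            * CP) := by
  obtain ⟨m, rfl⟩ : ∃ m, n = m + 1 := ⟨n - 1, by omega⟩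
  have hm : (1 : ℝ) ≤ m := by
    have : 1 ≤ m := by omega
    exact_mod_cast this
  have hm0 : (0 : ℝ) < m := by linarith
  set z : Fin (m + 1) → Fin (m + 1) → W := fun i j => ζ (e i) (e j) with hz
  set S := ∑ i, ∑ j, ‖z i j‖ ^ 2 with hS
  set P := ∑ i : Fin m, ∑ j : Fin m, ‖z i.castSucc j.castSucc‖ ^ 2 with hP
  set A := ∑ i : Fin m, z i.castSucc i.castSucc with hA
  set B := z (Fin.last m) (Fin.last m) with hB
  set D := ∑ i : Fin m, ‖z i.castSucc i.castSucc‖ ^ 2 with hD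
  have hτ2 : 2 * τ = ‖A + B‖ ^ 2 - S := by
    have hf := two_mul_sum_lt_aux (fun i j => T (e i) (e j) (e j) (e i))
      (fun i j => by
        simp only [hT]
        rw [real_inner_comm, hζ (e i) (e j)])
      (fun i => by simp [hT])
    rw [hτ, hf]
    have hAB : A + B = ∑ i, z i i := by rw [Fin.sum_univ_castSucc]
    rw [hAB, ← real_inner_self_eq_norm_sq, sum_inner]
    simp only [inner_sum, hS, ← Finset.sum_sub_distrib]
    refine Finset.sum_congr rfl fun i _ => Finset.sum_congr rfl fun j _ => ?_
    rw [hT, hζ (e j) (e i), real_inner_self_eq_norm_sq]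
  have hCP2 : CP = 1 / (m : ℝ) * P := by
    rw [hCP, hP]
    simp only [Finset.sum_filter, Fin.sum_univ_castSucc]
    simp [hz]
  have hSD : D + ‖B‖ ^ 2 ≤ S := by
    have := diag_le_aux (fun i j => ‖z i j‖ ^ 2) (fun i j => by positivity)
    rwa [Fin.sum_univ_castSucc] at this
  have hPD : D ≤ P :=
    diag_le_aux (fun i j : Fin m => ‖z i.castSucc j.castSucc‖ ^ 2) (fun i j => by positivity)
  have hAD : ‖A‖ ^ 2 ≤ m * D := norm_sum_sq_le_aux _
  have hAB : ‖A + B‖ ^ 2 ≤ (‖A‖ + ‖B‖) ^ 2 :=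
    pow_le_pow_left₀ (norm_nonneg _) (norm_add_le _ _) 2
  have hC2 : C = 1 / ((m : ℝ) + 1) * S := by rw [hC]; push_cast; rfl
  clear_value S P A B D
  rw [hτ2, hC2, hCP2, div_eq_inv_mul, ← one_div]
  push_cast at hr1 ⊢
  refine mul_le_mul_of_nonneg_left ?_ (by
    rw [add_sub_cancel_right]; positivity)
  have hc : 0 ≤ ((m : ℝ) + 1) * m - r := by linarith
  have key : ((m : ℝ) + 1) * r * ‖A + B‖ ^ 2 ≤
      ((m : ℝ) + 1 + r) * (r * S + (((m : ℝ) + 1) * m - r) * P) := by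
    have e1 : r * (D + ‖B‖ ^ 2) ≤ r * S := mul_le_mul_of_nonneg_left hSD hr0.le
    have e2 := mul_le_mul_of_nonneg_left hPD hc
    have e3 : ((m : ℝ) + 1) * ‖A‖ ^ 2 ≤ ((m : ℝ) + 1) * (m * D) :=
      mul_le_mul_of_nonneg_left hAD (by positivity)
    have e4 : ((m : ℝ) + 1) * ‖A‖ ^ 2 + r * ‖B‖ ^ 2 ≤
        r * S + (((m : ℝ) + 1) * m - r) * P := by nlinarith
    have e5 := mul_le_mul_of_nonneg_left e4 (show 0 ≤ (m : ℝ) + 1 + r by positivity)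
    have e6 := mul_le_mul_of_nonneg_left hAB (show 0 ≤ ((m : ℝ) + 1) * r by positivity)
    nlinarith [sq_nonneg (((m : ℝ) + 1) * ‖A‖ - r * ‖B‖)]
  have hfin : r * (1 / ((m : ℝ) + 1) * S) +
      ((m : ℝ) + 1 - 1) * ((m : ℝ) + 1 + r) * (((m : ℝ) + 1) ^ 2 - ((m : ℝ) + 1) - r) /
        (((m : ℝ) + 1) * r) * (1 / (m : ℝ) * P) + S =
      ((m : ℝ) + 1 + r) * (r * S + (((m : ℝ) + 1) * m - r) * P) / (((m : ℝ) + 1) * r) := by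
    field_simp
    ring
  have : ‖A + B‖ ^ 2 ≤
      ((m : ℝ) + 1 + r) * (r * S + (((m : ℝ) + 1) * m - r) * P) / (((m : ℝ) + 1) * r) := by
    rw [le_div_iff₀ (by positivity)]
    linarith
  linarith
end

section
/- Let V be an n-dimensional real inner product space (n ≥ 2), W a real inner product space, ζ : V × V → W a symmetric bilinear map, and T the tensor defined by the algebraic Gauss equation. Fix an orthonormal basis (e_1,…,e_n) of V with ζ_{ij} = ζ(e_i,e_j), and let Π_{n−1} be the hyperplane spanned by e_1,…,e_{n−1}. Then equality 2τ_T/(n(n−1)) = 2 C^{T,ζ} − ((2n−1)/(2n)) C^{T,ζ}(Π_{n−1}) holds if and only if ζ_{ij} = 0 for all i ≠ j, i,j ∈ {1,…,n}, and ζ_{11} = ζ_{22} = ⋯ = ζ_{n−1,n−1} = 2 ζ_{nn}. -/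
open RealInnerProductSpace


lemma cas_half_sum (n : ℕ) (t : Fin n → Fin n → ℝ) (hs : ∀ i j, t i j = t j i)
    (h0 : ∀ i, t i i = 0) :
    2 * (∑ i, ∑ j, if i < j then t i j else 0) = ∑ i, ∑ j, t i j := by
  have h1 : (∑ i, ∑ j, if i < j then t i j else 0) = ∑ i, ∑ j, if j < i then t i j else 0 := by
    rw [Finset.sum_comm]
    refine Finset.sum_congr rfl fun i _ => Finset.sum_congr rfl fun j _ => ?_
    rw [hs j i]
  rw [two_mul]
  nth_rewrite 2 [h1]
  simp only [← Finset.sum_add_distrib]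
  refine Finset.sum_congr rfl fun i _ => Finset.sum_congr rfl fun j _ => ?_
  rcases lt_trichotomy i j with h | h | h
  · simp [h, h.not_gt]
  · subst h; simp [h0]
  · simp [h, h.not_gt]

lemma cas_filter_sum (m : ℕ) (f : Fin (m + 1) → ℝ) :
    ∑ i ∈ Finset.univ.filter (fun i : Fin (m + 1) => (i : ℕ) < m + 1 - 1), f i
      = ∑ i : Fin m, f i.castSucc := by
  rw [Finset.sum_filter, Fin.sum_univ_castSucc]
  simp

lemma cas_diag {W : Type*} [NormedAddCommGroup W] [InnerProductSpace ℝ W] (m : ℕ)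
    (a : Fin m → W) (b c : W) (hc : (∑ i, a i) + b = (2 * (m : ℝ) + 1) • c) :
    (∑ i, (1 / 2) * ‖a i - (2 : ℝ) • c‖ ^ 2) + ‖b - c‖ ^ 2
      = (1 / 2) * (∑ i, ‖a i‖ ^ 2) + ‖b‖ ^ 2 - (2 * (m : ℝ) + 1) * ‖c‖ ^ 2 := by
  have h1 : ∀ i, (1 / 2) * ‖a i - (2 : ℝ) • c‖ ^ 2
      = (1 / 2) * ‖a i‖ ^ 2 - 2 * ⟪a i, c⟫ + 2 * ‖c‖ ^ 2 := by
    intro i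
    rw [norm_sub_sq_real, inner_smul_right, norm_smul, mul_pow]
    norm_num
    ring
  have h2 : ⟪(∑ i, a i) + b, c⟫ = (2 * (m : ℝ) + 1) * ‖c‖ ^ 2 := by
    rw [hc, real_inner_smul_left, real_inner_self_eq_norm_sq]
  rw [inner_add_left, sum_inner] at h2
  simp only [h1, Finset.sum_add_distrib, Finset.sum_sub_distrib, ← Finset.mul_sum]
  rw [norm_sub_sq_real]
  simp
  linarith

lemma cas_split (m : ℕ) (f : Fin m → Fin m → ℝ) :
    ∑ i, ∑ j, f i j = (∑ i, ∑ j, if i = j then 0 else f i j) + ∑ i, f i i := by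
  rw [← Finset.sum_add_distrib]
  refine Finset.sum_congr rfl fun i _ => ?_
  have : f i i = ∑ j, if i = j then f i j else 0 := by simp
  rw [this, ← Finset.sum_add_distrib]
  refine Finset.sum_congr rfl fun j _ => ?_
  split_ifs <;> simp

lemma cas_key {W : Type*} [NormedAddCommGroup W] [InnerProductSpace ℝ W] (m : ℕ)
    (F : Fin (m + 1) → Fin (m + 1) → W) (hF : ∀ i j, F i j = F j i) :
    (‖∑ i, F i i‖ ^ 2 = (2 * (m : ℝ) + 1) * ((∑ i, ∑ j, ‖F i j‖ ^ 2)
        - (∑ i : Fin m, ∑ j : Fin m, ‖F i.castSucc j.castSucc‖ ^ 2) / 2)) ↔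
    ((∀ i j, i ≠ j → F i j = 0) ∧
      ∀ i : Fin m, F i.castSucc i.castSucc = (2 : ℝ) • F (Fin.last m) (Fin.last m)) := by
  have hm : (0 : ℝ) < 2 * (m : ℝ) + 1 := by positivity
  obtain ⟨c, hc⟩ : ∃ c : W, (∑ i, F i i) = (2 * (m : ℝ) + 1) • c :=
    ⟨(2 * (m : ℝ) + 1)⁻¹ • ∑ i, F i i, by rw [smul_smul, mul_inv_cancel₀ hm.ne', one_smul]⟩
  have hc' := hc
  rw [Fin.sum_univ_castSucc] at hc'
  have hd := cas_diag m (fun i => F i.castSucc i.castSucc) _ c hc'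
  have hsp := cas_split m (fun i j => ‖F i.castSucc j.castSucc‖ ^ 2)
  have hS : (∑ i, ∑ j, ‖F i j‖ ^ 2) = (∑ i : Fin m, ∑ j : Fin m, ‖F i.castSucc j.castSucc‖ ^ 2)
      + 2 * (∑ i : Fin m, ‖F i.castSucc (Fin.last m)‖ ^ 2)
      + ‖F (Fin.last m) (Fin.last m)‖ ^ 2 := by
    simp only [Fin.sum_univ_castSucc, Finset.sum_add_distrib, hF (Fin.last m) (Fin.castSucc _)]
    ring
  rw [hc, norm_smul, mul_pow, Real.norm_eq_abs, sq_abs, hS]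
  set P := ∑ i : Fin m, ∑ j : Fin m, ‖F i.castSucc j.castSucc‖ ^ 2
  set D := ∑ i : Fin m, ‖F i.castSucc i.castSucc‖ ^ 2
  set Q := ∑ i : Fin m, ‖F i.castSucc (Fin.last m)‖ ^ 2 with hQ
  set O := ∑ i : Fin m, ∑ j : Fin m, if i = j then 0 else ‖F i.castSucc j.castSucc‖ ^ 2 with hO
  set E := ∑ i : Fin m, (1 / 2) * ‖F i.castSucc i.castSucc - (2 : ℝ) • c‖ ^ 2 with hE
  set b := F (Fin.last m) (Fin.last m)
  have hO1 : ∀ i j : Fin m, 0 ≤ if i = j then 0 else ‖F i.castSucc j.castSucc‖ ^ 2 := by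
    intro i j; split_ifs <;> positivity
  have hO0 : 0 ≤ O := Finset.sum_nonneg fun i _ => Finset.sum_nonneg fun j _ => hO1 i j
  have hQ0 : 0 ≤ Q := by positivity
  have hE0 : 0 ≤ E := by positivity
  have hb0 : 0 ≤ ‖b - c‖ ^ 2 := by positivity
  constructor
  · intro h
    have h' : (2 * (m : ℝ) + 1) * ‖c‖ ^ 2 = P + 2 * Q + ‖b‖ ^ 2 - P / 2 := by
      apply mul_left_cancel₀ hm.ne'
      linarith
    have hQz : Q = 0 := by linarith
    have hOz : O = 0 := by linarith
    have hEz : E = 0 := by linarith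
    have hbz : ‖b - c‖ ^ 2 = 0 := by linarith
    have hbc : b = c := by simpa [sub_eq_zero] using hbz
    have hQi : ∀ i : Fin m, F i.castSucc (Fin.last m) = 0 := by
      intro i
      rw [hQ, Finset.sum_eq_zero_iff_of_nonneg (fun i _ => by positivity)] at hQz
      simpa using hQz i (Finset.mem_univ i)
    have hOi : ∀ i j : Fin m, i ≠ j → F i.castSucc j.castSucc = 0 := by
      intro i j hij
      rw [hO, Finset.sum_eq_zero_iff_of_nonneg
        (fun i _ => Finset.sum_nonneg fun j _ => hO1 i j)] at hOz
      have h2 := hOz i (Finset.mem_univ i)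
      rw [Finset.sum_eq_zero_iff_of_nonneg (fun j _ => hO1 i j)] at h2
      simpa [hij] using h2 j (Finset.mem_univ j)
    refine ⟨?_, ?_⟩
    · intro i j
      refine Fin.lastCases ?_ (fun i => ?_) i <;> refine Fin.lastCases ?_ (fun j => ?_) j
      · intro h; exact absurd rfl h
      · intro _; rw [hF]; exact hQi j
      · intro _; exact hQi i
      · intro h; exact hOi i j (fun h' => h (by rw [h']))
    · intro i
      rw [hE, Finset.sum_eq_zero_iff_of_nonneg (fun i _ => by positivity)] at hEz
      rw [hbc]
      simpa [sub_eq_zero] using hEz i (Finset.mem_univ i)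
  · rintro ⟨h1, h2⟩
    have hbc : b = c := by
      have : (2 * (m : ℝ) + 1) • b = (2 * (m : ℝ) + 1) • c := by
        rw [← hc']
        simp only [h2]
        rw [Finset.sum_const, Finset.card_univ, Fintype.card_fin, ← Nat.cast_smul_eq_nsmul ℝ]
        module
      exact smul_right_injective W hm.ne' this
    have hQz : Q = 0 := by
      rw [hQ]; refine Finset.sum_eq_zero fun i _ => ?_
      rw [h1 _ _ (Fin.castSucc_lt_last i).ne]; simp
    have hOz : O = 0 := by
      rw [hO]; refine Finset.sum_eq_zero fun i _ => Finset.sum_eq_zero fun j _ => ?_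
      split_ifs with hij
      · rfl
      · rw [h1 _ _ (fun h => hij (Fin.castSucc_injective m h))]; simp
    have hEz : E = 0 := by
      rw [hE]; refine Finset.sum_eq_zero fun i _ => ?_
      rw [h2, hbc]; simp
    have hbz : ‖b - c‖ ^ 2 = 0 := by rw [hbc]; simp
    have h' : (2 * (m : ℝ) + 1) * ‖c‖ ^ 2 = P + 2 * Q + ‖b‖ ^ 2 - P / 2 := by linarith
    rw [pow_two, mul_assoc, h']

/-- STATEMENT 13: Equality
`2τ_T/(n(n−1)) = 2 C^{T,ζ} − ((2n−1)/(2n)) C^{T,ζ}(P_{n−1})` holds iff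
`ζ_{ij} = 0` for `i ≠ j` and `ζ_{11} = ⋯ = ζ_{n−1,n−1} = 2 ζ_{nn}`. -/
theorem algebraic_casorati_equality_delta_hat_iff
    {V W : Type*} [NormedAddCommGroup V] [InnerProductSpace ℝ V]
    [FiniteDimensional ℝ V] [NormedAddCommGroup W] [InnerProductSpace ℝ W]
    (n : ℕ) (hn : 2 ≤ n) (e : OrthonormalBasis (Fin n) ℝ V)
    (ζ : V →ₗ[ℝ] V →ₗ[ℝ] W) (hζ : ∀ X Y : V, ζ X Y = ζ Y X)
    (T : V → V → V → V → ℝ)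
    (hT : ∀ X Y Z W' : V, T X Y Z W' = ⟪ζ X W', ζ Y Z⟫ - ⟪ζ X Z, ζ Y W'⟫)
    (τ C CP : ℝ)
    (hτ : τ = ∑ i : Fin n, ∑ j : Fin n,
        if i < j then T (e i) (e j) (e j) (e i) else 0)
    (hC : C = (1 / (n : ℝ)) * ∑ i : Fin n, ∑ j : Fin n, ‖ζ (e i) (e j)‖ ^ 2)
    (hCP : CP = (1 / ((n : ℝ) - 1)) *
        ∑ i ∈ Finset.univ.filter (fun i : Fin n => (i : ℕ) < n - 1),
          ∑ j ∈ Finset.univ.filter (fun j : Fin n => (j : ℕ) < n - 1),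
            ‖ζ (e i) (e j)‖ ^ 2) :
    (2 * τ / ((n : ℝ) * ((n : ℝ) - 1)) =
        2 * C - ((2 * (n : ℝ) - 1) / (2 * (n : ℝ))) * CP) ↔
    ((∀ i j : Fin n, i ≠ j → ζ (e i) (e j) = 0) ∧
      (∀ i : Fin n, (i : ℕ) < n - 1 →
        ζ (e i) (e i) = (2 : ℝ) •
          ζ (e ⟨n - 1, by omega⟩) (e ⟨n - 1, by omega⟩))) := by
  obtain ⟨m, rfl⟩ : ∃ m, n = m + 1 := ⟨n - 1, by omega⟩
  have hm : (0 : ℝ) < m := by exact_mod_cast (by omega : 0 < m)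
  have hτ2 : 2 * τ = ‖∑ i, ζ (e i) (e i)‖ ^ 2 - ∑ i, ∑ j, ‖ζ (e i) (e j)‖ ^ 2 := by
    rw [hτ, cas_half_sum (m + 1) (fun i j => T (e i) (e j) (e j) (e i))]
    · rw [← real_inner_self_eq_norm_sq, sum_inner, ← Finset.sum_sub_distrib]
      refine Finset.sum_congr rfl fun i _ => ?_
      rw [inner_sum, ← Finset.sum_sub_distrib]
      refine Finset.sum_congr rfl fun j _ => ?_
      rw [hT, hζ (e j) (e i), real_inner_self_eq_norm_sq]
    · intro i j
      simp only [hT]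
      rw [real_inner_comm, hζ (e j) (e i)]
    · intro i
      simp only [hT, sub_self]
  have hk := cas_key m (fun i j => ζ (e i) (e j)) (fun i j => hζ _ _)
  simp only [cas_filter_sum] at hCP
  have hR : (∀ i : Fin (m + 1), (i : ℕ) < m + 1 - 1 →
        ζ (e i) (e i) = (2 : ℝ) •
          ζ (e ⟨m + 1 - 1, by omega⟩) (e ⟨m + 1 - 1, by omega⟩)) ↔
      ∀ i : Fin m, ζ (e i.castSucc) (e i.castSucc)
        = (2 : ℝ) • ζ (e (Fin.last m)) (e (Fin.last m)) := by
    constructor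
    · intro h i
      exact h i.castSucc (by simp)
    · intro h i hi
      exact h ⟨i, by omega⟩
  rw [hR, ← hk, hτ2, hC, hCP]
  generalize (∑ i, ∑ j, ‖ζ (e i) (e j)‖ ^ 2) = S
  generalize (∑ i : Fin m, ∑ j : Fin m, ‖ζ (e i.castSucc) (e j.castSucc)‖ ^ 2) = P
  generalize ‖∑ i, ζ (e i) (e i)‖ ^ 2 = H
  push_cast
  have h1 : (m : ℝ) + 1 ≠ 0 := by positivity
  have e1 : (m : ℝ) + 1 - 1 = m := by ring
  rw [e1]
  have key : (H - S) / (((m : ℝ) + 1) * m) - (2 * (1 / ((m : ℝ) + 1) * S)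
      - (2 * ((m : ℝ) + 1) - 1) / (2 * ((m : ℝ) + 1)) * (1 / (m : ℝ) * P))
      = (H - (2 * (m : ℝ) + 1) * (S - P / 2)) / (((m : ℝ) + 1) * m) := by
    field_simp
    ring
  rw [← sub_eq_zero, key, div_eq_zero_iff, ← sub_eq_zero (a := H)]
  simp [h1, hm.ne']
end
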